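/- Let R be a connected reduced order. Suppose A and B are stark subrings of R and G and H are subgroups of the unit group R^* such that the natural ring homomorphisms A[G] → R and B[H] → R are both isomorphisms. Then the natural ring homomorphisms A[H] → R and B[G] → R are also isomorphisms. -/

import Mathlib

/-- The natural ring homomorphism `A[G] → R` for a subring `A ⊆ R` and a subgroup `G ⊆ Rˣ`. -/
noncomputable def gpRgHom {R : Type*} [CommRing R] (A : Subring R) (G : Subgroup Rˣ) :
    MonoidAlgebra A G →+* R :=
  MonoidAlgebra.liftNCRingHom A.subtype ((Units.coeHom R).comp G.subtype)
    (fun _ _ => Commute.all _ _)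

/-- `A[G] = R`: the natural map `A[G] → R` is a ring isomorphism. -/
def IsGpRg {R : Type*} [CommRing R] (A : Subring R) (G : Subgroup Rˣ) : Prop :=
  Function.Bijective (gpRgHom A G)

/-- A commutative ring is connected if it is non-zero and `0`, `1` are its only idempotents. -/
def IsConnectedRing (R : Type*) [CommRing R] : Prop :=
  Nontrivial R ∧ ∀ e : R, IsIdempotentElem e → e = 0 ∨ e = 1

/-- A commutative ring is stark if it is not isomorphic to any group ring `A[G]`
with `A` a ring and `G` a non-trivial group. -/
def IsStark (R : Type u) [CommRing R] : Prop :=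
  ∀ (A : Type u) (_ : Ring A) (G : Type u) (_ : Group G),
    Nontrivial G → IsEmpty (R ≃+* MonoidAlgebra A G)

/-!
A decomposition `R = A[G]` is a `G`-grading of `R` with unit part `A` in which every `g ∈ G` is
homogeneous of degree `g`. Characters of the finite group `G` twist the ring homomorphisms
`R → ℂ`, so parts of distinct degrees are orthogonal in the Minkowski embedding of `R`. An element
that is not homogeneous is therefore a sum of two strictly shorter ones; descending with respect to
two gradings at once shows that `R` is spanned by elements that are homogeneous for both.

If `u` is a torsion unit, the products `u_k (u⁻¹)_{k⁻¹}` have image `|σ(u_k)|²` under each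
`σ : R → ℂ`. These are nonnegative with sum `1`, while a nonzero element of an order has some
conjugate of absolute value at least `1`, so the products are idempotents, and connectedness makes
`u` homogeneous. Hence `H → G` and `G → H` are defined by taking degrees. If `H → G` had a
non-trivial kernel, then splitting off the generalised kernel `N` of the composite `θ : H → G → H`
would exhibit `A` as a group ring over `N`, against starkness; so both degree maps are injective,
hence bijective, and `A[H] = B[G] = R`.
-/

open scoped TensorProduct ComplexConjugate

section ReducedOrder

theorem exists_one_le_norm_embedding {F : Type*} [Field F] [NumberField F] {a : F}
    (ha : IsIntegral ℤ a) (ha₀ : a ≠ 0) : ∃ σ : F →+* ℂ, 1 ≤ ‖σ a‖ := by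
  by_contra! hlt
  have hplace (w : NumberField.InfinitePlace F) : w a < 1 := by
    rw [← w.norm_embedding_eq]
    exact hlt w.embedding
  obtain ⟨w⟩ : Nonempty (NumberField.InfinitePlace F) := inferInstance
  have hb : (⟨a, ha⟩ : NumberField.RingOfIntegers F) ≠ 0 := fun h ↦ ha₀ (congrArg Subtype.val h)
  exact (NumberField.InfinitePlace.one_le_of_lt_one (w := w) hb fun z _ ↦ hplace z).not_gt
    (hplace w)

variable {R : Type*} [CommRing R] [Module.Free ℤ R] [Module.Finite ℤ R]

theorem exists_ringHom_numberField_ne_zero {R : Type u} [CommRing R] [Module.Free ℤ R]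
    [Module.Finite ℤ R] [IsReduced R] {x : R} (hx : x ≠ 0) :
    ∃ (F : Type u) (_ : Field F) (_ : NumberField F) (f : R →+* F), f x ≠ 0 := by
  let ι : R →ₐ[ℤ] ℚ ⊗[ℤ] R := Algebra.TensorProduct.includeRight
  have hι : Function.Injective ι :=
    Algebra.TensorProduct.includeRight_injective (RingHom.injective_int _)
  have hnil : ¬ IsNilpotent (ι x) := fun h ↦ hx ((IsNilpotent.map_iff hι).mp h).eq_zero
  obtain ⟨P, hP, hxP⟩ : ∃ P : Ideal (ℚ ⊗[ℤ] R), P.IsPrime ∧ ι x ∉ P := by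
    simpa [nilpotent_iff_mem_prime] using hnil
  have : IsArtinianRing (ℚ ⊗[ℤ] R) := .of_finite ℚ _
  have : P.IsMaximal := IsArtinianRing.isMaximal_of_isPrime P
  let : Field (ℚ ⊗[ℤ] R ⧸ P) := Ideal.Quotient.field P
  have : CharZero (ℚ ⊗[ℤ] R ⧸ P) := algebraRat.charZero _
  have : NumberField (ℚ ⊗[ℤ] R ⧸ P) :=
    { to_finiteDimensional := by
        convert (inferInstance : Module.Finite ℚ (ℚ ⊗[ℤ] R ⧸ P))
        subsingleton }
  exact ⟨ℚ ⊗[ℤ] R ⧸ P, inferInstance, this, (Ideal.Quotient.mk P).comp ι.toRingHom,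
    fun h ↦ hxP (Ideal.Quotient.eq_zero_iff_mem.mp h)⟩

theorem exists_one_le_norm_ringHom [IsReduced R] {x : R} (hx : x ≠ 0) :
    ∃ σ : R →+* ℂ, 1 ≤ ‖σ x‖ := by
  obtain ⟨F, _, _, f, hfx⟩ := exists_ringHom_numberField_ne_zero hx
  have hint : IsIntegral ℤ (f x) := (Algebra.IsIntegral.isIntegral x).map f.toIntAlgHom
  obtain ⟨σ, hσ⟩ := exists_one_le_norm_embedding hint hfx
  exact ⟨σ.comp f, hσ⟩

theorem eq_zero_of_forall_ringHom_complex [IsReduced R] {x : R} (hx : ∀ σ : R →+* ℂ, σ x = 0) :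
    x = 0 := by
  by_contra hne
  obtain ⟨σ, hσ⟩ := exists_one_le_norm_ringHom hne
  norm_num [hx σ] at hσ

theorem isIdempotentElem_of_forall_map_mem_Icc [IsReduced R] {e : R}
    (he : ∀ σ : R →+* ℂ, ∃ r ∈ Set.Icc (0 : ℝ) 1, σ e = r) : IsIdempotentElem e := by
  by_contra hne
  have hne' : e * (1 - e) ≠ 0 := by
    rwa [mul_sub, mul_one, sub_ne_zero, ne_comm]
  obtain ⟨σ, hσ⟩ := exists_one_le_norm_ringHom hne'
  obtain ⟨r, ⟨hr₀, hr₁⟩, hr⟩ := he σ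
  have hnorm : ‖σ (e * (1 - e))‖ = r * (1 - r) := by
    rw [map_mul, map_sub, map_one, hr, ← Complex.ofReal_one, ← Complex.ofReal_sub,
      ← Complex.ofReal_mul, Complex.norm_of_nonneg (mul_nonneg hr₀ (sub_nonneg.mpr hr₁))]
  nlinarith

theorem finite_ringHom (L : Type*) [CommRing L] [IsDomain L] : Finite (R →+* L) :=
  .of_equiv (R →ₐ[ℤ] L) (RingHom.equivIntAlgHom R L).symm

end ReducedOrder

section MinkowskiEmbedding

variable {R : Type*} [CommRing R]

/-- The Minkowski embedding of a ring `R`, which sends `x` to the vector of all `σ x` for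
`σ : R →+* ℂ`. It gives `R` the inner product that measures the length of elements. -/
noncomputable def minkowskiEmbedding (R : Type*) [CommRing R] :
    R →+ EuclideanSpace ℂ (R →+* ℂ) where
  toFun x := WithLp.toLp 2 fun σ ↦ σ x
  map_zero' := by ext; simp
  map_add' x y := by ext; simp

@[simp]
theorem minkowskiEmbedding_apply (x : R) (σ : R →+* ℂ) : minkowskiEmbedding R x σ = σ x := rfl

theorem minkowskiEmbedding_injective [Module.Free ℤ R] [Module.Finite ℤ R] [IsReduced R] :
    Function.Injective (minkowskiEmbedding R) :=
  (injective_iff_map_eq_zero _).mpr fun _ hx ↦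
    eq_zero_of_forall_ringHom_complex fun σ ↦ congrArg (· σ) hx

variable [Fintype (R →+* ℂ)]

theorem inner_minkowskiEmbedding (x y : R) :
    inner ℂ (minkowskiEmbedding R x) (minkowskiEmbedding R y) =
      ∑ σ : R →+* ℂ, σ y * conj (σ x) := by
  simp [PiLp.inner_apply]

variable [Module.Free ℤ R] [Module.Finite ℤ R] [IsReduced R]

theorem one_le_norm_minkowskiEmbedding {x : R} (hx : x ≠ 0) : 1 ≤ ‖minkowskiEmbedding R x‖ := by
  obtain ⟨σ, hσ⟩ := exists_one_le_norm_ringHom hx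
  exact hσ.trans (PiLp.norm_apply_le (minkowskiEmbedding R x) σ)

theorem finite_setOf_norm_minkowskiEmbedding_le (C : ℝ) :
    {x : R | ‖minkowskiEmbedding R x‖ ≤ C}.Finite := by
  have hdisc : DiscreteTopology (minkowskiEmbedding R).range := by
    refine DiscreteTopology.of_forall_le_dist zero_lt_one ?_
    rintro ⟨_, x, rfl⟩ ⟨_, y, rfl⟩ hxy
    rw [Subtype.dist_eq, dist_eq_norm, ← map_sub]
    exact one_le_norm_minkowskiEmbedding (sub_ne_zero.mpr fun h ↦ hxy (by simp [h]))
  have hfin := Metric.finite_isBounded_inter_isClosed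
    (SetLike.isDiscrete_iff_discreteTopology.mpr hdisc)
    (Metric.isBounded_closedBall (x := (0 : EuclideanSpace ℂ (R →+* ℂ))) (r := C))
    (AddSubgroup.isClosed_of_discrete (H := (minkowskiEmbedding R).range))
  refine (hfin.preimage minkowskiEmbedding_injective.injOn).subset fun x hx ↦ ?_
  simpa using hx

theorem wellFounded_norm_minkowskiEmbedding_lt :
    WellFounded fun x y : R ↦ ‖minkowskiEmbedding R x‖ < ‖minkowskiEmbedding R y‖ := by
  refine WellFounded.wellFounded_iff_has_min.mpr fun s ⟨x, hx⟩ ↦ ?_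
  obtain ⟨m, ⟨hms, hmx⟩, hmin⟩ := Set.exists_min_image
    (s ∩ {y | ‖minkowskiEmbedding R y‖ ≤ ‖minkowskiEmbedding R x‖}) (‖minkowskiEmbedding R ·‖)
    ((finite_setOf_norm_minkowskiEmbedding_le _).inter_of_right s) ⟨x, hx, le_rfl (a := ‖_‖)⟩
  exact ⟨m, hms, fun y hys hlt ↦ (hmin y ⟨hys, hlt.le.trans hmx⟩).not_gt hlt⟩

end MinkowskiEmbedding

/-- The `k`-homogeneous elements for a ring homomorphism `D : R → R[K]`: those `x` with
`D x = x · k`. -/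
noncomputable def homogeneousPart {R K : Type*} [CommRing R] [CommGroup K]
    (D : R →+* MonoidAlgebra R K) (k : K) : AddSubgroup R :=
  D.toAddMonoidHom.eqLocus (MonoidAlgebra.singleAddHom k)

/-- A grading of the ring `R` by the group `K`, encoded as the coaction `R → R[K]` that sends
`x = ∑ k, x_k` to `∑ k, x_k · k`. Multiplicativity of the grading is that of the coaction. -/
structure GroupGrading (R K : Type*) [CommRing R] [CommGroup K] where
  coaction : R →+* MonoidAlgebra R K
  iSup_homogeneousPart : ⨆ k, homogeneousPart coaction k = ⊤

namespace GroupGrading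

section Basic

variable {R K L : Type*} [CommRing R] [CommGroup K] [CommGroup L] (𝒢 : GroupGrading R K)

/-- The additive subgroup of homogeneous elements of degree `k`. -/
noncomputable def part (k : K) : AddSubgroup R := homogeneousPart 𝒢.coaction k

/-- The projection onto the homogeneous part of degree `k`. -/
noncomputable def component (k : K) : R →+ R :=
  ((Finsupp.applyAddHom k).comp MonoidAlgebra.coeffAddEquiv.toAddMonoidHom).comp
    𝒢.coaction.toAddMonoidHom

/-- The subring of homogeneous elements of degree `1`. -/
noncomputable def oneSubring : Subring R := 𝒢.coaction.eqLocus MonoidAlgebra.singleOneRingHom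

variable {𝒢} {k l : K} {x y : R}

theorem mem_part : x ∈ 𝒢.part k ↔ 𝒢.coaction x = .single k x := Iff.rfl

theorem mem_oneSubring : x ∈ 𝒢.oneSubring ↔ x ∈ 𝒢.part 1 := Iff.rfl

theorem component_apply : 𝒢.component k x = (𝒢.coaction x).coeff k := rfl

@[elab_as_elim]
theorem induction {p : R → Prop} (homogeneous : ∀ k, ∀ x ∈ 𝒢.part k, p x)
    (add : ∀ x y, p x → p y → p (x + y)) (x : R) : p x :=
  AddSubgroup.iSup_induction 𝒢.part (C := p) (show x ∈ ⨆ k, 𝒢.part k from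
    𝒢.iSup_homogeneousPart ▸ AddSubgroup.mem_top x) homogeneous
    (homogeneous 1 0 (zero_mem _)) add

theorem one_mem_part : (1 : R) ∈ 𝒢.part 1 := mem_oneSubring.mp (one_mem _)

theorem mul_mem_part (hx : x ∈ 𝒢.part k) (hy : y ∈ 𝒢.part l) : x * y ∈ 𝒢.part (k * l) := by
  rw [mem_part] at *
  rw [map_mul, hx, hy, MonoidAlgebra.single_mul_single]

theorem component_of_mem_part (hx : x ∈ 𝒢.part k) : 𝒢.component k x = x := by
  simp [component_apply, mem_part.mp hx]

theorem component_of_mem_part_of_ne (hx : x ∈ 𝒢.part k) (hkl : k ≠ l) : 𝒢.component l x = 0 := by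
  simp [component_apply, mem_part.mp hx, hkl]

theorem eq_of_mem_part (hx₀ : x ≠ 0) (hk : x ∈ 𝒢.part k) (hl : x ∈ 𝒢.part l) : k = l := by
  by_contra hkl
  exact hx₀ (by rw [← component_of_mem_part hl, component_of_mem_part_of_ne hk hkl])

theorem exists_degreeHom [Nontrivial R] {G : Type*} [Group G] (u : G →* R)
    (hu : ∀ g, ∃ k, u g ∈ 𝒢.part k) : ∃ deg : G →* K, ∀ g, u g ∈ 𝒢.part (deg g) := by
  choose deg hdeg using hu
  have hu₀ (g : G) : u g ≠ 0 := ((Group.isUnit g).map u).ne_zero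
  exact ⟨.mk' deg fun a b ↦ eq_of_mem_part (hu₀ (a * b)) (hdeg (a * b))
    (map_mul u a b ▸ mul_mem_part (hdeg a) (hdeg b)), hdeg⟩

theorem component_mem_part (k : K) (x : R) : 𝒢.component k x ∈ 𝒢.part k := by
  induction x using 𝒢.induction with
  | homogeneous l x hx =>
    obtain rfl | hlk := eq_or_ne l k
    · rwa [component_of_mem_part hx]
    · rw [component_of_mem_part_of_ne hx hlk]
      exact zero_mem _
  | add x y hx hy => simpa only [map_add] using add_mem hx hy

theorem sum_component [Fintype K] (x : R) : ∑ k, 𝒢.component k x = x := by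
  induction x using 𝒢.induction with
  | homogeneous l x hx =>
    rw [Fintype.sum_eq_single l fun k hk ↦ component_of_mem_part_of_ne hx hk.symm,
      component_of_mem_part hx]
  | add x y hx hy => simp only [map_add, Finset.sum_add_distrib, hx, hy]

theorem exists_component_ne_zero [Finite K] (hx : x ≠ 0) : ∃ k, 𝒢.component k x ≠ 0 := by
  have := Fintype.ofFinite K
  by_contra! h
  exact hx (by rw [← 𝒢.sum_component x, Finset.sum_eq_zero fun k _ ↦ h k])

theorem sum_component_mul_component_inv [Fintype K] (x y : R) :
    ∑ k, 𝒢.component k x * 𝒢.component k⁻¹ y = 𝒢.component 1 (x * y) := by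
  simp only [component_apply, map_mul]
  rw [MonoidAlgebra.coeff_mul_apply_left, Finsupp.sum_fintype _ _ (by simp)]
  simp

theorem mem_iSup_inf_part_of_mem_oneSubring {ℋ : GroupGrading R L}
    (hsup : ⨆ k, ⨆ l, 𝒢.part k ⊓ ℋ.part l = ⊤) (hx : x ∈ 𝒢.oneSubring) :
    x ∈ ⨆ l, 𝒢.oneSubring.toAddSubgroup ⊓ ℋ.part l := by
  set T := ⨆ l, 𝒢.oneSubring.toAddSubgroup ⊓ ℋ.part l
  have hle : ⨆ k, ⨆ l, 𝒢.part k ⊓ ℋ.part l ≤ T.comap (𝒢.component 1) := by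
    refine iSup₂_le fun k l y hy ↦ ?_
    obtain rfl | hk := eq_or_ne k 1
    · rw [AddSubgroup.mem_comap, component_of_mem_part hy.1]
      exact AddSubgroup.mem_iSup_of_mem l hy
    · rw [AddSubgroup.mem_comap, component_of_mem_part_of_ne hy.1 hk]
      exact zero_mem T
  rw [← component_of_mem_part (mem_oneSubring.mp hx)]
  exact hle (hsup ▸ AddSubgroup.mem_top x)

end Basic

section Functoriality

variable {R K L : Type*} [CommRing R] [CommGroup K] [CommGroup L]

theorem homogeneousPart_le_homogeneousPart_mapDomain (D : R →+* MonoidAlgebra R K) (f : K →* L)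
    (k : K) :
    homogeneousPart D k ≤ homogeneousPart ((MonoidAlgebra.mapDomainRingHom R f).comp D) (f k) := by
  intro x (hx : D x = .single k x)
  change MonoidAlgebra.mapDomain f (D x) = .single (f k) x
  rw [hx, MonoidAlgebra.mapDomain_single]

/-- The coarsening of a grading along a group homomorphism. -/
noncomputable def map (𝒢 : GroupGrading R K) (f : K →* L) : GroupGrading R L where
  coaction := (MonoidAlgebra.mapDomainRingHom R f).comp 𝒢.coaction
  iSup_homogeneousPart := by
    rw [eq_top_iff, ← 𝒢.iSup_homogeneousPart]
    exact iSup_le fun k ↦ (homogeneousPart_le_homogeneousPart_mapDomain _ f k).trans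
      (le_iSup_of_le (f k) le_rfl)

theorem part_le_part_map (𝒢 : GroupGrading R K) (f : K →* L) (k : K) :
    𝒢.part k ≤ (𝒢.map f).part (f k) :=
  homogeneousPart_le_homogeneousPart_mapDomain 𝒢.coaction f k

theorem injective_mapRingHom_subtype (S : Subring R) :
    Function.Injective (MonoidAlgebra.mapRingHom K S.subtype) :=
  MonoidAlgebra.map_injective S.subtype.toAddMonoidHom S.subtype_injective

theorem bijective_rangeRestrict_mapRingHom_subtype (S : Subring R) :
    Function.Bijective (MonoidAlgebra.mapRingHom K S.subtype).rangeRestrict :=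
  ⟨fun _ _ h ↦ injective_mapRingHom_subtype S (congrArg Subtype.val h),
    RingHom.rangeRestrict_surjective _⟩

/-- The restriction of `D : R → R[K]` to a subring `S` that it maps into `S[K]`. -/
noncomputable def restrictCoaction (D : R →+* MonoidAlgebra R K) (S : Subring R)
    (hS : ∀ x : S, D x ∈ (MonoidAlgebra.mapRingHom K S.subtype).range) :
    S →+* MonoidAlgebra S K :=
  (RingEquiv.ofBijective _ (bijective_rangeRestrict_mapRingHom_subtype S)).symm.toRingHom.comp
    ((D.comp S.subtype).codRestrict _ hS)

theorem mapRingHom_restrictCoaction (D : R →+* MonoidAlgebra R K) (S : Subring R)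
    (hS : ∀ x : S, D x ∈ (MonoidAlgebra.mapRingHom K S.subtype).range) (x : S) :
    MonoidAlgebra.mapRingHom K S.subtype (restrictCoaction D S hS x) = D x :=
  congrArg Subtype.val ((RingEquiv.ofBijective _
    (bijective_rangeRestrict_mapRingHom_subtype S)).apply_symm_apply ⟨D x, hS x⟩)

theorem homogeneousPart_restrictCoaction (D : R →+* MonoidAlgebra R K) (S : Subring R)
    (hS : ∀ x : S, D x ∈ (MonoidAlgebra.mapRingHom K S.subtype).range) (k : K) :
    homogeneousPart (restrictCoaction D S hS) k =
      (homogeneousPart D k).comap S.subtype.toAddMonoidHom := by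
  ext x
  change restrictCoaction D S hS x = .single k x ↔ D x = .single k (x : R)
  rw [← (injective_mapRingHom_subtype S).eq_iff, mapRingHom_restrictCoaction,
    MonoidAlgebra.mapRingHom_single, Subring.subtype_apply]

theorem map_subtype_iSup_comap_part (𝒢 : GroupGrading R K) (S : Subring R) :
    (⨆ k, (𝒢.part k).comap S.subtype.toAddMonoidHom).map S.subtype.toAddMonoidHom =
      ⨆ k, S.toAddSubgroup ⊓ 𝒢.part k := by
  rw [AddSubgroup.map_iSup]
  congr! 2 with k
  rw [AddSubgroup.map_comap_eq]
  congr 1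
  ext; simp

theorem coaction_mem_range_mapRingHom (𝒢 : GroupGrading R K) {S : Subring R} {x : R}
    (hx : x ∈ ⨆ k, S.toAddSubgroup ⊓ 𝒢.part k) :
    𝒢.coaction x ∈ (MonoidAlgebra.mapRingHom K S.subtype).range := by
  have hle : ⨆ k, S.toAddSubgroup ⊓ 𝒢.part k ≤
      (MonoidAlgebra.mapRingHom K S.subtype).range.toAddSubgroup.comap
        𝒢.coaction.toAddMonoidHom := by
    refine iSup_le fun k y hy ↦ ⟨.single k ⟨y, hy.1⟩, ?_⟩
    simpa using (mem_part.mp hy.2).symm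
  exact hle hx

/-- The grading of a subring that is generated additively by homogeneous elements. -/
noncomputable def restrict (𝒢 : GroupGrading R K) (S : Subring R)
    (hS : S.toAddSubgroup ≤ ⨆ k, S.toAddSubgroup ⊓ 𝒢.part k) : GroupGrading S K where
  coaction := restrictCoaction 𝒢.coaction S fun x ↦ 𝒢.coaction_mem_range_mapRingHom (hS x.2)
  iSup_homogeneousPart := by
    simp only [homogeneousPart_restrictCoaction]
    refine eq_top_iff.mpr fun x _ ↦ ?_
    obtain ⟨y, hy, hyx⟩ := (𝒢.map_subtype_iSup_comap_part S).ge (hS x.2)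
    rwa [← S.subtype_injective hyx]

theorem mem_part_restrict {𝒢 : GroupGrading R K} {S : Subring R}
    {hS : S.toAddSubgroup ≤ ⨆ k, S.toAddSubgroup ⊓ 𝒢.part k} {k : K} {x : S} :
    x ∈ (𝒢.restrict S hS).part k ↔ (x : R) ∈ 𝒢.part k := by
  rw [part, restrict, homogeneousPart_restrictCoaction]
  rfl

end Functoriality

section NaturalMap

variable {R K U : Type*} [CommRing R] [CommGroup K] [CommGroup U] {𝒢 : GroupGrading R K}
  {w : U →* R} {deg : U →* K}

theorem component_liftNCRingHom (hdeg : Function.Injective deg)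
    (hw : ∀ u, w u ∈ 𝒢.part (deg u)) (x : MonoidAlgebra 𝒢.oneSubring U) (u : U) :
    𝒢.component (deg u)
        (MonoidAlgebra.liftNCRingHom 𝒢.oneSubring.subtype w (fun _ _ ↦ Commute.all _ _) x) =
      x.coeff u * w u := by
  induction x using MonoidAlgebra.induction_linear with
  | zero => simp
  | add x y hx hy => simp only [map_add, hx, hy, MonoidAlgebra.coeff_add, Finsupp.add_apply,
      Subring.coe_add, add_mul]
  | single v a =>
    have hmem : (a : R) * w v ∈ 𝒢.part (deg v) := by
      simpa using mul_mem_part (mem_oneSubring.mp a.2) (hw v)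
    obtain rfl | hvu := eq_or_ne v u
    · simpa using component_of_mem_part hmem
    · simpa [hvu] using component_of_mem_part_of_ne hmem (hdeg.ne hvu)

theorem bijective_liftNCRingHom (hdeg : Function.Bijective deg)
    (hw : ∀ u, w u ∈ 𝒢.part (deg u)) :
    Function.Bijective
      (MonoidAlgebra.liftNCRingHom 𝒢.oneSubring.subtype w fun _ _ ↦ Commute.all _ _) := by
  have hinv (u : U) : w u⁻¹ * w u = 1 := by rw [← map_mul, inv_mul_cancel, map_one]
  constructor
  · refine (injective_iff_map_eq_zero _).mpr fun x hx ↦ ?_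
    ext u
    have hu : (x.coeff u : R) * w u = 0 := by
      rw [← component_liftNCRingHom hdeg.1 hw, hx, map_zero]
    calc (x.coeff u : R) = x.coeff u * w u * w u⁻¹ := by
          rw [mul_assoc, mul_comm (w u), hinv, mul_one]
      _ = 0 := by rw [hu, zero_mul]
  · intro x
    induction x using 𝒢.induction with
    | homogeneous k x hx =>
      obtain ⟨u, rfl⟩ := hdeg.2 k
      have hmem : x * w u⁻¹ ∈ 𝒢.oneSubring := by
        simpa [mem_oneSubring] using mul_mem_part hx (hw u⁻¹)
      exact ⟨.single u ⟨_, hmem⟩, by simp [mul_assoc, hinv]⟩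
    | add x y hx hy =>
      obtain ⟨⟨a, rfl⟩, b, rfl⟩ := hx, hy
      exact ⟨a + b, map_add _ a b⟩

theorem isGpRg_oneSubring {G : Subgroup Rˣ} {deg : G →* K} (hdeg : Function.Bijective deg)
    (hG : ∀ g : G, ((g : Rˣ) : R) ∈ 𝒢.part (deg g)) : IsGpRg 𝒢.oneSubring G :=
  bijective_liftNCRingHom (w := (Units.coeHom R).comp G.subtype) hdeg hG

end NaturalMap

end GroupGrading

section Characters

variable {K : Type*} [CommGroup K]

theorem norm_character_apply [Finite K] (χ : K →* ℂˣ) (k : K) : ‖(χ k : ℂ)‖ = 1 := by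
  have hpow : (χ k : ℂ) ^ orderOf k = 1 := by
    rw [← Units.val_pow_eq_pow_val, ← map_pow, pow_orderOf_eq_one, map_one, Units.val_one]
  exact Complex.norm_eq_one_of_pow_eq_one hpow (orderOf_pos k).ne'

theorem inv_character_apply [Finite K] (χ : K →* ℂˣ) (k : K) : (χ k⁻¹ : ℂ) = conj (χ k : ℂ) := by
  rw [map_inv, Units.val_inv_eq_inv_val, Complex.inv_eq_conj (norm_character_apply χ k)]

theorem exists_character_apply_ne [Finite K] {k l : K} (hkl : k ≠ l) :
    ∃ χ : K →* ℂˣ, χ k ≠ χ l := by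
  have : NeZero (Monoid.exponent K) := ⟨Monoid.exponent_ne_zero_of_finite⟩
  by_contra! h
  exact hkl ((CommGroup.forall_apply_eq_apply_iff K (M := ℂ)).mp h)

theorem eq_of_forall_sum_mul_character_eq [Fintype K] {f g : K → ℂ}
    (hfg : ∀ χ : K →* ℂˣ, ∑ k, f k * χ k = ∑ k, g k * χ k) : f = g := by
  let eval (k : K) : (K →* ℂˣ) →* ℂ := (Units.coeHom ℂ).comp (MonoidHom.eval k)
  have heval : Function.Injective eval := by
    intro k l hkl
    by_contra hne
    obtain ⟨χ, hχ⟩ := exists_character_apply_ne hne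
    exact hχ (Units.ext (DFunLike.congr_fun hkl χ))
  have hind : LinearIndependent ℂ fun k ↦ (eval k : (K →* ℂˣ) → ℂ) :=
    (linearIndependent_monoidHom (K →* ℂˣ) ℂ).comp eval heval
  have hsub : ∑ k, (f - g) k • (eval k : (K →* ℂˣ) → ℂ) = 0 := by
    ext χ
    simpa [eval, sub_mul, sub_eq_zero] using hfg χ
  ext k
  exact sub_eq_zero.mp (Fintype.linearIndependent_iff.mp hind _ hsub k)

end Characters

namespace GroupGrading

section Twist

variable {R K L : Type*} [CommRing R] [CommGroup K] [CommRing L] {𝒢 : GroupGrading R K} {k : K}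
  {x : R}

/-- The twist of a ring homomorphism `σ : R →+* L` by a character `χ` of the grading group: it
multiplies `σ` by `χ k` on the homogeneous elements of degree `k`. -/
noncomputable def twist (𝒢 : GroupGrading R K) (χ : K →* Lˣ) (σ : R →+* L) : R →+* L :=
  (MonoidAlgebra.liftNCRingHom σ ((Units.coeHom L).comp χ) fun _ _ ↦ Commute.all _ _).comp
    𝒢.coaction

theorem twist_apply_of_mem_part (χ : K →* Lˣ) (σ : R →+* L) (hx : x ∈ 𝒢.part k) :
    𝒢.twist χ σ x = σ x * χ k := by
  simp [twist, mem_part.mp hx]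

theorem twist_apply [Fintype K] (χ : K →* Lˣ) (σ : R →+* L) (x : R) :
    𝒢.twist χ σ x = ∑ k, σ (𝒢.component k x) * χ k := by
  rw [← congrArg (𝒢.twist χ σ) (𝒢.sum_component x), map_sum]
  exact Finset.sum_congr rfl fun k _ ↦ twist_apply_of_mem_part χ σ (component_mem_part k x)

theorem twist_inv_twist (χ : K →* Lˣ) (σ : R →+* L) : 𝒢.twist χ⁻¹ (𝒢.twist χ σ) = σ := by
  ext x
  induction x using 𝒢.induction with
  | homogeneous k x hx => simp [twist_apply_of_mem_part _ _ hx, mul_assoc]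
  | add x y hx hy => rw [map_add, map_add, hx, hy]

theorem twist_bijective (𝒢 : GroupGrading R K) (χ : K →* Lˣ) :
    Function.Bijective (𝒢.twist χ) :=
  Function.bijective_iff_has_inverse.mpr ⟨𝒢.twist χ⁻¹, twist_inv_twist χ,
    fun σ ↦ (congrArg (𝒢.twist · _) (inv_inv χ)).symm.trans (twist_inv_twist χ⁻¹ σ)⟩

end Twist

section Orthogonality

variable {R K : Type*} [CommRing R] [CommGroup K] [Finite K] [Fintype (R →+* ℂ)]
  {𝒢 : GroupGrading R K} {k l : K} {x y : R}

-- Twisting by a character permutes the ring homomorphisms to `ℂ` and scales the inner product.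
theorem inner_minkowskiEmbedding_of_mem_part (hx : x ∈ 𝒢.part k) (hy : y ∈ 𝒢.part l)
    (hkl : k ≠ l) : inner ℂ (minkowskiEmbedding R x) (minkowskiEmbedding R y) = 0 := by
  obtain ⟨χ, hχ⟩ := exists_character_apply_ne hkl
  have htwist (σ : R →+* ℂ) : 𝒢.twist χ σ y * conj (𝒢.twist χ σ x) =
      χ (l * k⁻¹) * (σ y * conj (σ x)) := by
    rw [twist_apply_of_mem_part χ σ hx, twist_apply_of_mem_part χ σ hy, map_mul, map_mul,
      Units.val_mul, inv_character_apply]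
    ring
  have hscale : χ (l * k⁻¹) * ∑ σ : R →+* ℂ, σ y * conj (σ x) =
      ∑ σ : R →+* ℂ, σ y * conj (σ x) :=
    calc χ (l * k⁻¹) * ∑ σ : R →+* ℂ, σ y * conj (σ x)
        = ∑ σ : R →+* ℂ, 𝒢.twist χ σ y * conj (𝒢.twist χ σ x) := by
          simp only [Finset.mul_sum, htwist]
      _ = ∑ σ : R →+* ℂ, σ y * conj (σ x) :=
          (𝒢.twist_bijective χ).sum_comp fun σ ↦ σ y * conj (σ x)
  have hne : (χ (l * k⁻¹) : ℂ) ≠ 1 := by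
    rwa [Ne, Units.val_eq_one, map_mul, map_inv, mul_inv_eq_one, eq_comm]
  rw [inner_minkowskiEmbedding]
  by_contra hsum
  exact hne ((mul_eq_right₀ hsum).mp hscale)

theorem inner_minkowskiEmbedding_sub_component (hy : y ∈ 𝒢.part k) (x : R) :
    inner ℂ (minkowskiEmbedding R y) (minkowskiEmbedding R (x - 𝒢.component k x)) = 0 := by
  induction x using 𝒢.induction with
  | homogeneous l x hx =>
    obtain rfl | hlk := eq_or_ne l k
    · rw [component_of_mem_part hx, sub_self, map_zero, inner_zero_right]
    · rw [component_of_mem_part_of_ne hx hlk, sub_zero]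
      exact inner_minkowskiEmbedding_of_mem_part hy hx hlk.symm
  | add x x' hx hx' =>
    rw [map_add, add_sub_add_comm, map_add, inner_add_right, hx, hx', add_zero]

variable [Module.Free ℤ R] [Module.Finite ℤ R] [IsReduced R]

theorem exists_add_eq_and_norm_lt_and_norm_lt (hx : ∀ k, x ∉ 𝒢.part k) :
    ∃ y z, y + z = x ∧ ‖minkowskiEmbedding R y‖ < ‖minkowskiEmbedding R x‖ ∧
      ‖minkowskiEmbedding R z‖ < ‖minkowskiEmbedding R x‖ := by
  have hx₀ : x ≠ 0 := fun h ↦ hx 1 (h ▸ zero_mem _)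
  obtain ⟨k, hk⟩ := 𝒢.exists_component_ne_zero hx₀
  have hsub : x - 𝒢.component k x ≠ 0 := fun h ↦
    hx k (sub_eq_zero.mp h ▸ component_mem_part k x)
  have hpythagoras := norm_add_sq_eq_norm_sq_add_norm_sq_of_inner_eq_zero _ _
    (inner_minkowskiEmbedding_sub_component (𝒢.component_mem_part k x) x)
  rw [← map_add, add_sub_cancel] at hpythagoras
  have h₁ := one_le_norm_minkowskiEmbedding hk
  have h₂ := one_le_norm_minkowskiEmbedding hsub
  exact ⟨𝒢.component k x, x - 𝒢.component k x, add_sub_cancel _ x,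
    lt_of_mul_self_lt_mul_self₀ (norm_nonneg _) (by nlinarith),
    lt_of_mul_self_lt_mul_self₀ (norm_nonneg _) (by nlinarith)⟩

end Orthogonality

section CommonRefinement

variable {R K L : Type*} [CommRing R] [Module.Free ℤ R] [Module.Finite ℤ R] [IsReduced R]
  [CommGroup K] [CommGroup L] [Finite K] [Finite L]

theorem iSup_part_inf_part (𝒢 : GroupGrading R K) (ℋ : GroupGrading R L) :
    ⨆ k, ⨆ l, 𝒢.part k ⊓ ℋ.part l = ⊤ := by
  have := finite_ringHom (R := R) ℂ
  have := Fintype.ofFinite (R →+* ℂ)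
  refine eq_top_iff.mpr fun x _ ↦ wellFounded_norm_minkowskiEmbedding_lt.induction x
    (C := (· ∈ ⨆ k, ⨆ l, 𝒢.part k ⊓ ℋ.part l)) fun x ih ↦ ?_
  by_cases hx : (∃ k, x ∈ 𝒢.part k) ∧ ∃ l, x ∈ ℋ.part l
  · obtain ⟨⟨k, hk⟩, l, hl⟩ := hx
    exact AddSubgroup.mem_iSup_of_mem k (AddSubgroup.mem_iSup_of_mem l ⟨hk, hl⟩)
  · obtain ⟨y, z, rfl, hy, hz⟩ : ∃ y z, y + z = x ∧
        ‖minkowskiEmbedding R y‖ < ‖minkowskiEmbedding R x‖ ∧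
        ‖minkowskiEmbedding R z‖ < ‖minkowskiEmbedding R x‖ := by
      obtain h | h := not_and_or.mp hx
      · exact exists_add_eq_and_norm_lt_and_norm_lt (not_exists.mp h)
      · exact exists_add_eq_and_norm_lt_and_norm_lt (not_exists.mp h)
    exact add_mem (ih y hy) (ih z hz)

end CommonRefinement

section Units

variable {R K : Type*} [CommRing R] [CommGroup K] {𝒢 : GroupGrading R K} {g : Rˣ}

theorem map_component_inv_eq_conj [Finite K] (hg : ∀ σ : R →+* ℂ, ‖σ g‖ = 1) (σ : R →+* ℂ)
    (k : K) : σ (𝒢.component k⁻¹ ((g⁻¹ : Rˣ) : R)) = conj (σ (𝒢.component k (g : R))) := by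
  have := Fintype.ofFinite K
  have hinv (τ : R →+* ℂ) : τ ((g⁻¹ : Rˣ) : R) = conj (τ g) := by
    rw [← Complex.inv_eq_conj (hg τ)]
    refine eq_inv_of_mul_eq_one_left ?_
    rw [← map_mul, Units.inv_mul, map_one]
  have hfourier : (fun k ↦ σ (𝒢.component k ((g⁻¹ : Rˣ) : R))) =
      fun k ↦ conj (σ (𝒢.component k⁻¹ (g : R))) := by
    refine eq_of_forall_sum_mul_character_eq fun χ ↦ ?_
    calc ∑ k, σ (𝒢.component k ((g⁻¹ : Rˣ) : R)) * χ k
        = conj (𝒢.twist χ σ g) := by rw [← twist_apply, hinv]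
      _ = ∑ k, conj (σ (𝒢.component k (g : R))) * χ k⁻¹ := by
          simp only [twist_apply, map_sum, map_mul (starRingEnd ℂ), inv_character_apply]
      _ = ∑ k, conj (σ (𝒢.component k⁻¹ (g : R))) * χ k := by
          rw [← Equiv.sum_comp (Equiv.inv K)]
          simp
  simpa using congrFun hfourier k⁻¹

theorem map_component_mul_component_inv [Finite K] (hg : ∀ σ : R →+* ℂ, ‖σ g‖ = 1)
    (σ : R →+* ℂ) (k : K) :
    σ (𝒢.component k (g : R) * 𝒢.component k⁻¹ ((g⁻¹ : Rˣ) : R)) =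
      (‖σ (𝒢.component k (g : R))‖ ^ 2 : ℝ) := by
  rw [map_mul, map_component_inv_eq_conj hg, Complex.mul_conj, Complex.normSq_eq_norm_sq]

theorem sum_norm_map_component_sq [Fintype K] (hg : ∀ σ : R →+* ℂ, ‖σ g‖ = 1) (σ : R →+* ℂ) :
    ∑ k, ‖σ (𝒢.component k (g : R))‖ ^ 2 = 1 := by
  have hsum := congrArg σ (𝒢.sum_component_mul_component_inv (g : R) ((g⁻¹ : Rˣ) : R))
  rw [Units.mul_inv, component_of_mem_part one_mem_part, map_one, map_sum] at hsum
  simp only [map_component_mul_component_inv hg] at hsum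
  exact_mod_cast hsum

variable [Module.Free ℤ R] [Module.Finite ℤ R] [IsReduced R]

theorem isIdempotentElem_component_mul_component_inv [Finite K]
    (hg : ∀ σ : R →+* ℂ, ‖σ g‖ = 1) (k : K) :
    IsIdempotentElem (𝒢.component k (g : R) * 𝒢.component k⁻¹ ((g⁻¹ : Rˣ) : R)) := by
  have := Fintype.ofFinite K
  refine isIdempotentElem_of_forall_map_mem_Icc fun σ ↦
    ⟨_, ⟨sq_nonneg _, ?_⟩, map_component_mul_component_inv hg σ k⟩
  rw [← sum_norm_map_component_sq (𝒢 := 𝒢) hg σ]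
  exact Finset.single_le_sum (f := fun k ↦ ‖σ (𝒢.component k (g : R))‖ ^ 2)
    (fun _ _ ↦ sq_nonneg _) (Finset.mem_univ k)

theorem exists_mem_part_of_forall_norm_eq_one [Finite K] (hconn : IsConnectedRing R)
    (hg : ∀ σ : R →+* ℂ, ‖σ g‖ = 1) : ∃ k, (g : R) ∈ 𝒢.part k := by
  have := Fintype.ofFinite K
  have := hconn.1
  obtain ⟨k, hk⟩ : ∃ k, 𝒢.component k (g : R) * 𝒢.component k⁻¹ ((g⁻¹ : Rˣ) : R) ≠ 0 := by
    by_contra! h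
    have hsum := 𝒢.sum_component_mul_component_inv (g : R) ((g⁻¹ : Rˣ) : R)
    rw [Finset.sum_eq_zero fun k _ ↦ h k, Units.mul_inv, component_of_mem_part one_mem_part]
      at hsum
    exact zero_ne_one hsum
  have hk₁ : 𝒢.component k (g : R) * 𝒢.component k⁻¹ ((g⁻¹ : Rˣ) : R) = 1 :=
    (hconn.2 _ (isIdempotentElem_component_mul_component_inv hg k)).resolve_left hk
  have hnorm (σ : R →+* ℂ) : ‖σ (𝒢.component k (g : R))‖ ^ 2 = 1 := by
    have hmap := map_component_mul_component_inv (𝒢 := 𝒢) hg σ k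
    rw [hk₁, map_one] at hmap
    exact_mod_cast hmap.symm
  have hzero (l : K) (hl : l ≠ k) : 𝒢.component l (g : R) = 0 := by
    refine eq_zero_of_forall_ringHom_complex fun σ ↦ ?_
    have hsum := sum_norm_map_component_sq (𝒢 := 𝒢) hg σ
    classical
    rw [← Finset.add_sum_erase _ _ (Finset.mem_univ k), hnorm, add_eq_left,
      Finset.sum_eq_zero_iff_of_nonneg fun _ _ ↦ sq_nonneg _] at hsum
    simpa using hsum l (Finset.mem_erase.mpr ⟨hl, Finset.mem_univ l⟩)
  have hgk : 𝒢.component k (g : R) = g := by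
    rw [← Fintype.sum_eq_single k hzero, sum_component]
  exact ⟨k, hgk ▸ component_mem_part k _⟩

theorem exists_mem_part_of_isOfFinOrder [Finite K] (𝒢 : GroupGrading R K)
    (hconn : IsConnectedRing R) (hg : IsOfFinOrder g) : ∃ k, (g : R) ∈ 𝒢.part k := by
  refine exists_mem_part_of_forall_norm_eq_one hconn fun σ ↦
    Complex.norm_eq_one_of_pow_eq_one (n := orderOf g) ?_ hg.orderOf_pos.ne'
  rw [← map_pow, ← Units.val_pow_eq_pow_val, pow_orderOf_eq_one, Units.val_one, map_one]

end Units

end GroupGrading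

section GroupRingCoaction

variable {R : Type*} [CommRing R] {A : Subring R} {G : Subgroup Rˣ}

theorem gpRgHom_single (a : A) (g : G) :
    gpRgHom A G (.single g a) = a * ((g : Rˣ) : R) := by
  simp [gpRgHom]

/-- The ring homomorphism `A[G] → R[G]` that sends `a · g` to `(a g) · g`. -/
noncomputable def groupRingCoaction (A : Subring R) (G : Subgroup Rˣ) :
    MonoidAlgebra A G →+* MonoidAlgebra R G :=
  MonoidAlgebra.liftNCRingHom (MonoidAlgebra.singleOneRingHom.comp A.subtype)
    { toFun g := .single g ((g : Rˣ) : R)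
      map_one' := rfl
      map_mul' g h := by simp [MonoidAlgebra.single_mul_single] }
    fun _ _ ↦ Commute.all _ _

theorem groupRingCoaction_single (a : A) (g : G) :
    groupRingCoaction A G (.single g a) = .single g (a * ((g : Rˣ) : R)) := by
  simp [groupRingCoaction, MonoidAlgebra.single_mul_single]

end GroupRingCoaction

namespace IsGpRg

variable {R : Type*} [CommRing R] {A : Subring R} {G : Subgroup Rˣ}

theorem finite [Nontrivial R] [Module.Finite ℤ R] (h : IsGpRg A G) : Finite G := by
  have : Module.Finite ℤ (MonoidAlgebra A G) :=
    .equiv (RingEquiv.ofBijective _ h).symm.toIntAlgEquiv.toLinearEquiv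
  have : Module.Finite A (MonoidAlgebra A G) := .of_restrictScalars_finite ℤ A _
  exact Module.Finite.finite_basis (Module.Basis.ofRepr (MonoidAlgebra.coeffLinearEquiv A))

theorem mul_mem_homogeneousPart (h : IsGpRg A G) (a : A) (g : G) :
    a * ((g : Rˣ) : R) ∈ homogeneousPart
      ((groupRingCoaction A G).comp (RingEquiv.ofBijective _ h).symm.toRingHom) g := by
  change groupRingCoaction A G ((RingEquiv.ofBijective _ h).symm _) = _
  rw [(RingEquiv.symm_apply_eq _).mpr (gpRgHom_single a g).symm, groupRingCoaction_single]
  rfl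

theorem induction (h : IsGpRg A G) {p : R → Prop} (zero : p 0)
    (mul : ∀ (a : A) (g : G), p (a * ((g : Rˣ) : R)))
    (add : ∀ x y, p x → p y → p (x + y)) (x : R) : p x := by
  obtain ⟨y, rfl⟩ := h.2 x
  induction y using MonoidAlgebra.induction_linear with
  | zero => rwa [map_zero]
  | single g a => exact gpRgHom_single a g ▸ mul a g
  | add y z hy hz => exact map_add (gpRgHom A G) y z ▸ add _ _ hy hz

/-- The grading of `R = A[G]` by `G` with homogeneous parts `A · g`. -/
noncomputable def grading (h : IsGpRg A G) : GroupGrading R G where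
  coaction := (groupRingCoaction A G).comp (RingEquiv.ofBijective _ h).symm.toRingHom
  iSup_homogeneousPart := eq_top_iff.mpr fun x _ ↦ h.induction (zero_mem _)
    (fun a g ↦ AddSubgroup.mem_iSup_of_mem g (h.mul_mem_homogeneousPart a g))
    (fun _ _ ↦ add_mem) x

theorem mul_mem_part_grading (h : IsGpRg A G) (a : A) (g : G) :
    a * ((g : Rˣ) : R) ∈ h.grading.part g :=
  h.mul_mem_homogeneousPart a g

theorem coe_mem_part_grading (h : IsGpRg A G) (g : G) :
    ((g : Rˣ) : R) ∈ h.grading.part g := by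
  simpa using h.mul_mem_part_grading 1 g

theorem oneSubring_grading (h : IsGpRg A G) : h.grading.oneSubring = A := by
  have hle (a : A) : (a : R) ∈ h.grading.part 1 := by
    simpa using h.mul_mem_part_grading a 1
  refine le_antisymm (fun x hx ↦ ?_) fun a ha ↦ hle ⟨a, ha⟩
  rw [← GroupGrading.component_of_mem_part (GroupGrading.mem_oneSubring.mp hx)]
  refine h.induction (p := fun x ↦ h.grading.component 1 x ∈ A) (by simp [zero_mem])
    (fun a g ↦ ?_) (fun y z hy hz ↦ by simpa only [map_add] using add_mem hy hz) x
  obtain rfl | hg := eq_or_ne g 1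
  · simp [GroupGrading.component_of_mem_part (hle a)]
  · rw [GroupGrading.component_of_mem_part_of_ne (h.mul_mem_part_grading a g) hg]
    exact zero_mem A

end IsGpRg

section StableKernel

variable {H : Type*} [CommGroup H] [Finite H]

theorem exists_ker_le_ker_and_disjoint_ker_range (θ : H →* H) :
    ∃ (n : ℕ) (η : H →* H), ⇑η = θ^[n] ∧ θ.ker ≤ η.ker ∧ Disjoint η.ker η.range := by
  -- In `H →* H` the power `θ ^ n` is pointwise; in `Monoid.End H` it is the iterate.
  let f : Monoid.End H := θ
  let power (n : ℕ) : H →* H := f ^ n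
  have hpower (n : ℕ) : ⇑(power n) = θ^[n] := Monoid.End.coe_pow H f n
  have hmono : Monotone fun n ↦ (power n).ker := monotone_nat_of_le_succ fun n h hh ↦ by
    rw [MonoidHom.mem_ker, hpower] at hh ⊢
    rw [Function.iterate_succ_apply', hh, map_one]
  obtain ⟨n, hn⟩ := WellFoundedGT.monotone_chain_condition ⟨_, hmono⟩
  replace hn (m : ℕ) (hm : n ≤ m) : (power n).ker = (power m).ker := hn m hm
  refine ⟨n, power n, hpower n, fun h hh ↦ ?_, Subgroup.disjoint_def.mpr ?_⟩
  · rw [hn (n + 1) n.le_succ, MonoidHom.mem_ker, hpower, Function.iterate_succ_apply,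
      MonoidHom.mem_ker.mp hh, iterate_map_one]
  · rintro _ hker ⟨h, rfl⟩
    rw [MonoidHom.mem_ker, hpower, ← Function.iterate_add_apply, ← hpower,
      ← MonoidHom.mem_ker, ← hn (n + n) (Nat.le_add_left n n)] at hker
    exact hker

theorem exists_ker_le_and_bijective_mk_div (θ : H →* H) :
    ∃ N M : Subgroup H, θ.ker ≤ N ∧ Function.Bijective
      (((QuotientGroup.mk' M).comp (MonoidHom.id H / θ)).comp N.subtype) := by
  obtain ⟨n, η, hη, hker, hdisj⟩ := exists_ker_le_ker_and_disjoint_ker_range θ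
  refine ⟨η.ker, η.range, hker, Function.Injective.bijective_of_nat_card_le ?_
    (Subgroup.index_range (f := η)).le⟩
  refine (injective_iff_map_eq_one _).mpr fun ⟨h, hh⟩ hrange ↦ Subtype.ext ?_
  replace hrange : h / θ h ∈ η.range := (QuotientGroup.eq_one_iff _).mp hrange
  have hθ : θ h ∈ η.ker := by
    rw [MonoidHom.mem_ker, hη] at hh ⊢
    rw [← Function.iterate_succ_apply, Function.iterate_succ_apply', hh, map_one]
  have hfix : θ h = h :=
    (div_eq_one.mp (Subgroup.disjoint_def.mp hdisj (div_mem hh hθ) hrange)).symm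
  calc h = θ^[n] h := (Function.iterate_fixed hfix n).symm
    _ = 1 := by rw [← hη, MonoidHom.mem_ker.mp hh]

end StableKernel

section Crossover

variable {R H : Type u} {G : Type*} [CommRing R] [CommGroup G] [CommGroup H]
  {𝒢 : GroupGrading R G} {ℋ : GroupGrading R H}

theorem injective_degree_of_isStark [Finite H] (hstark : IsStark 𝒢.oneSubring)
    (hsup : ⨆ g, ⨆ h, 𝒢.part g ⊓ ℋ.part h = ⊤) {u : G →* R} {v : H →* R} {φ : G →* H}
    {ψ : H →* G} (hu : ∀ g, u g ∈ 𝒢.part g ⊓ ℋ.part (φ g))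
    (hv : ∀ h, v h ∈ 𝒢.part (ψ h) ⊓ ℋ.part h) : Function.Injective ψ := by
  -- The units `v h * (u (ψ h))⁻¹` of `𝒢.oneSubring` have degree `h / φ (ψ h)` for `ℋ`. Coarsened
  -- to `H ⧸ M` these degrees are all attained exactly once by `h ∈ N`, so `𝒢.oneSubring ≅ A'[N]`.
  obtain ⟨N, M, hN, hbij⟩ := exists_ker_le_and_bijective_mk_div (φ.comp ψ)
  let gradingOne := ℋ.restrict 𝒢.oneSubring fun _ ↦
    GroupGrading.mem_iSup_inf_part_of_mem_oneSubring hsup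
  let w : H →* 𝒢.oneSubring := (v * u.comp (invMonoidHom.comp ψ)).codRestrict 𝒢.oneSubring
    fun h ↦ by
      simpa [GroupGrading.mem_oneSubring] using
        GroupGrading.mul_mem_part (hv h).1 (hu (ψ h)⁻¹).1
  have hw (h : H) : w h ∈ gradingOne.part (h / φ (ψ h)) := by
    rw [GroupGrading.mem_part_restrict, div_eq_mul_inv, ← map_inv φ]
    exact GroupGrading.mul_mem_part (hv h).2 (hu (ψ h)⁻¹).2
  have hsplit := GroupGrading.bijective_liftNCRingHom
    (𝒢 := gradingOne.map (QuotientGroup.mk' M)) (w := w.comp N.subtype) hbij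
    fun h ↦ GroupGrading.part_le_part_map gradingOne _ _ (hw h)
  have hNtriv : Subsingleton N := by
    by_contra hN'
    exact (hstark _ _ N inferInstance (not_subsingleton_iff_nontrivial.mp hN')).false
      (RingEquiv.ofBijective _ hsplit).symm
  refine (MonoidHom.ker_eq_bot_iff ψ).mp (eq_bot_iff.mpr ?_)
  calc ψ.ker ≤ (φ.comp ψ).ker := φ.comap_ker ψ ▸ MonoidHom.ker_le_comap ψ φ.ker
    _ ≤ N := hN
    _ = ⊥ := N.eq_bot_of_subsingleton

end Crossover

namespace IsGpRg

variable {R : Type u} [CommRing R] {A B : Subring R} {G H : Subgroup Rˣ}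

theorem of_bijective_degree (hAG : IsGpRg A G) {ψ : H →* G} (hbij : Function.Bijective ψ)
    (hψ : ∀ h : H, ((h : Rˣ) : R) ∈ hAG.grading.part (ψ h)) : IsGpRg A H := by
  rw [← hAG.oneSubring_grading]
  exact GroupGrading.isGpRg_oneSubring hbij hψ

variable [Module.Finite ℤ R]

theorem exists_degreeHom [Module.Free ℤ R] [IsReduced R] (hconn : IsConnectedRing R)
    (hAG : IsGpRg A G) (hBH : IsGpRg B H) :
    ∃ ψ : H →* G, ∀ h : H, ((h : Rˣ) : R) ∈ hAG.grading.part (ψ h) := by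
  have := hconn.1
  have := hAG.finite
  have := hBH.finite
  exact hAG.grading.exists_degreeHom ((Units.coeHom R).comp H.subtype) fun h ↦
    hAG.grading.exists_mem_part_of_isOfFinOrder hconn
      (H.subtype.isOfFinOrder (isOfFinOrder_of_finite h))

theorem injective_degree [Module.Free ℤ R] [IsReduced R] [Nontrivial R] (hAG : IsGpRg A G)
    (hAstark : IsStark A) (hBH : IsGpRg B H) {φ : G →* H} {ψ : H →* G}
    (hφ : ∀ g : G, ((g : Rˣ) : R) ∈ hBH.grading.part (φ g))
    (hψ : ∀ h : H, ((h : Rˣ) : R) ∈ hAG.grading.part (ψ h)) : Function.Injective ψ := by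
  have := hAG.finite
  have := hBH.finite
  rw [← hAG.oneSubring_grading] at hAstark
  exact injective_degree_of_isStark hAstark (hAG.grading.iSup_part_inf_part hBH.grading)
    (u := (Units.coeHom R).comp G.subtype) (v := (Units.coeHom R).comp H.subtype)
    (fun g ↦ ⟨hAG.coe_mem_part_grading g, hφ g⟩) fun h ↦ ⟨hψ h, hBH.coe_mem_part_grading h⟩

end IsGpRg

/-- Let `R` be a connected reduced order, `A`, `B` stark subrings of `R` and
`G`, `H` subgroups of `Rˣ` with `A[G] = B[H] = R`. Then `A[H] = B[G] = R`. -/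
theorem crossover
    {R : Type u} [CommRing R] [Module.Free ℤ R] [Module.Finite ℤ R] [IsReduced R]
    (hconn : IsConnectedRing R)
    (A B : Subring R) (G H : Subgroup Rˣ)
    (hAstark : IsStark A) (hBstark : IsStark B)
    (hAG : IsGpRg A G) (hBH : IsGpRg B H) :
    IsGpRg A H ∧ IsGpRg B G := by
  have := hconn.1
  have := hAG.finite
  have := hBH.finite
  obtain ⟨φ, hφ⟩ := IsGpRg.exists_degreeHom hconn hBH hAG
  obtain ⟨ψ, hψ⟩ := IsGpRg.exists_degreeHom hconn hAG hBH
  have hφinj : Function.Injective φ := hBH.injective_degree hBstark hAG hψ hφ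
  have hψinj : Function.Injective ψ := hAG.injective_degree hAstark hBH hφ hψ
  have hφbij := hφinj.bijective_of_nat_card_le (Nat.card_le_card_of_injective ψ hψinj)
  have hψbij := hψinj.bijective_of_nat_card_le (Nat.card_le_card_of_injective φ hφinj)
  exact ⟨hAG.of_bijective_degree hψbij hψ, hBH.of_bijective_degree hφbij hφ⟩
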